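/- arXiv:2310.07838 — 2 statements merged into one kernel-verified Lean document; each statement's English description precedes it below -/
import Mathlib

section
/- There is a universal constant c > 0 with the following property. Let S and A be nonempty finite sets with |A| ≥ 3, and let n be a positive integer with n ≥ |S|(|A|−1)/2 − 1. For every (possibly randomized) learner π̂ that maps the pair (D, R) — where D ∈ (S×A)^n and R = ((s_i, a_i, π*(a_i|s_i)))_{i=1}^n records the teacher probability of each sampled label — to a conditional distribution in Δ(A|S), there exist ρ ∈ Δ(S) and π* ∈ Δ(A|S) such that, when D consists of n i.i.d. samples from ρ×π*, the expected risk satisfies E[ TV(π̂(D,R) ‖ π* | ρ) ] ≥ c·|S||A|/n. -/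
open Finset MeasureTheory

/-- `p` is a probability distribution on the finite set `A`. -/
def IsDist {A : Type} [Fintype A] (p : A → ℝ) : Prop :=
  (∀ a, 0 ≤ p a) ∧ ∑ a, p a = 1

/-- `π` is a conditional probability distribution in `Δ(A|S)`. -/
def IsCondDist {S A : Type} [Fintype A] (π : S → A → ℝ) : Prop :=
  ∀ s, IsDist (π s)

/-- Conditional total variation `TV(π ‖ π' | ρ)`. -/
noncomputable def condTV {S A : Type} [Fintype S] [Fintype A]
    (ρ : S → ℝ) (π π' : S → A → ℝ) : ℝ :=
  ∑ s, ρ s * ((1 / 2) * ∑ a, |π s a - π' s a|)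

/-- Probability of the dataset `D` under `n` i.i.d. samples from `ρ × π`. -/
noncomputable def wt {S A : Type} {n : ℕ} (ρ : S → ℝ) (π : S → A → ℝ)
    (D : Fin n → S × A) : ℝ :=
  ∏ i, ρ (D i).1 * π (D i).1 (D i).2

section helpers

open Classical in
/-- The teacher family: base label `f none`, and one label of each pair has mass `ε`. -/
noncomputable def tch {S A : Type} {m : ℕ} (f : Option (Fin m × Bool) ↪ A) (ε : ℝ)
    (b : S × Fin m → Bool) (s : S) (a : A) : ℝ :=
  (∑ j, if a = f (some (j, b (s, j))) then ε else 0) + if a = f none then 1 - m * ε else 0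

lemma tch_dist {S A : Type} [Fintype A] {m : ℕ} (f : Option (Fin m × Bool) ↪ A) (ε : ℝ)
    (h0 : 0 ≤ ε) (h1 : m * ε ≤ 1) (b : S × Fin m → Bool) : IsCondDist (tch f ε b) := by
  classical
  intro s
  constructor
  · intro a
    unfold tch
    refine add_nonneg (Finset.sum_nonneg fun j _ => ?_) ?_
    · split_ifs <;> simp [h0]
    · split_ifs
      · linarith
      · exact le_rfl
  · unfold tch
    rw [Finset.sum_add_distrib, Finset.sum_comm]
    simp

lemma tch_val {S A : Type} {m : ℕ} (f : Option (Fin m × Bool) ↪ A) (ε : ℝ)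
    (b : S × Fin m → Bool) (s : S) (j : Fin m) (β : Bool) :
    tch f ε b s (f (some (j, β))) = if b (s, j) = β then ε else 0 := by
  classical
  unfold tch
  simp only [f.injective.eq_iff, Option.some.injEq, Prod.mk.injEq, reduceCtorEq, if_false, add_zero]
  rw [Finset.sum_eq_single j]
  · simp [eq_comm]
  · intro i _ hi
    simp [Ne.symm hi]
  · simp

open Classical in
/-- flip one bit -/
noncomputable def flp {K : Type} (k : K) (b : K → Bool) : K → Bool :=
  Function.update b k (!(b k))

lemma flp_flp {K : Type} (k : K) (b : K → Bool) : flp k (flp k b) = b := by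
  classical
  unfold flp
  simp

lemma flp_self {K : Type} (k : K) (b : K → Bool) : flp k b k = !(b k) := by
  simp [flp]

lemma flp_ne {K : Type} (k l : K) (b : K → Bool) (h : ¬ l = k) : flp k b l = b l := by
  unfold flp
  classical
  exact Function.update_of_ne h _ _

lemma tch_flp {S A : Type} {m : ℕ} (f : Option (Fin m × Bool) ↪ A) (ε : ℝ)
    (b : S × Fin m → Bool) (s : S) (j : Fin m) (s' : S) (a : A)
    (h : ∀ β, (s', a) ≠ (s, f (some (j, β)))) :
    tch f ε (flp (s, j) b) s' a = tch f ε b s' a := by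
  classical
  unfold tch
  congr 1
  refine Finset.sum_congr rfl fun i _ => ?_
  by_cases hk : (s', i) = (s, j)
  · obtain ⟨rfl, rfl⟩ := Prod.mk.injEq _ _ _ _ ▸ hk
    have h' : ∀ β, a ≠ f (some (i, β)) := fun β hh => h β (by rw [hh])
    simp [h']
  · have : flp (s, j) b (s', i) = b (s', i) := by
      exact flp_ne _ _ _ hk
    rw [this]

lemma wt_nonneg {S A : Type} [Fintype S] [Fintype A] {n : ℕ} {ρ : S → ℝ} {π : S → A → ℝ}
    (hρ : IsDist ρ) (hπ : IsCondDist π) (D : Fin n → S × A) : 0 ≤ wt ρ π D :=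
  Finset.prod_nonneg fun i _ => mul_nonneg (hρ.1 _) ((hπ _).1 _)

lemma wt_avoid {S A : Type} [Fintype S] [Fintype A] {n : ℕ} (ρ : S → ℝ) (π : S → A → ℝ)
    (hρ : IsDist ρ) (hπ : IsCondDist π) (T : Finset (S × A)) [DecidableEq (S × A)] :
    ∑ D ∈ Fintype.piFinset (fun _ : Fin n => Tᶜ), wt ρ π D
      = (1 - ∑ z ∈ T, ρ z.1 * π z.1 z.2) ^ n := by
  unfold wt
  have := (Finset.prod_univ_sum (fun _ : Fin n => Tᶜ)
    (fun _ (z : S × A) => ρ z.1 * π z.1 z.2)).symm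
  rw [this]
  simp only [Finset.prod_const, Finset.card_univ, Fintype.card_fin]
  congr 1
  have h1 : ∑ z : S × A, ρ z.1 * π z.1 z.2 = 1 := by
    rw [Fintype.sum_prod_type]
    simp only [← Finset.mul_sum, (hπ _).2, mul_one, hρ.2]
  rw [← h1, ← Finset.sum_compl_add_sum T]
  ring

lemma pair_bound {S A : Type} [Fintype S] [Fintype A] {n m : ℕ}
    (f : Option (Fin m × Bool) ↪ A) (ε : ℝ)
    (h0 : 0 ≤ ε) (h1 : m * ε ≤ 1) (ρ : S → ℝ) (hρ : IsDist ρ)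
    (G : (Fin n → S × A) → (Fin n → ℝ) → S → A → ℝ → ℝ)
    (hG0 : ∀ D R s a p, 0 ≤ G D R s a p)
    (hG1 : ∀ D R s a p q, |p - q| ≤ G D R s a p + G D R s a q)
    (s : S) (j : Fin m) (b : S × Fin m → Bool) (F : (S × Fin m → Bool) → ℝ)
    (hF : ∀ b, F b = ∑ D, wt ρ (tch f ε b) D * ∑ β : Bool,
      G D (fun i => tch f ε b (D i).1 (D i).2) s (f (some (j, β)))
        (tch f ε b s (f (some (j, β))))) :
    2 * ε * (1 - ρ s * ε) ^ n ≤ F b + F (flp (s, j) b) := by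
  classical
  set T : Finset (S × A) := Finset.univ.image (fun β : Bool => (s, f (some (j, β)))) with hT
  have hsum : ∑ z ∈ T, ρ z.1 * tch f ε b z.1 z.2 = ρ s * ε := by
    rw [hT, Finset.sum_image]
    · simp only [tch_val, Fintype.sum_bool]
      cases b (s, j) <;> simp
    · intro x _ y _ hxy
      simpa using hxy
  have key := wt_avoid (n := n) ρ (tch f ε b) hρ (tch_dist f ε h0 h1 b) T
  rw [hsum] at key
  have mono : ∀ b, ∑ D ∈ Fintype.piFinset (fun _ : Fin n => Tᶜ), wt ρ (tch f ε b) D * ∑ β : Bool,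
      G D (fun i => tch f ε b (D i).1 (D i).2) s (f (some (j, β)))
        (tch f ε b s (f (some (j, β)))) ≤ F b := by
    intro b
    rw [hF]
    refine Finset.sum_le_sum_of_subset_of_nonneg (Finset.subset_univ _) fun D _ _ => ?_
    exact mul_nonneg (wt_nonneg hρ (tch_dist f ε h0 h1 b) D)
      (Finset.sum_nonneg fun β _ => hG0 _ _ _ _ _)
  refine le_trans ?_ (add_le_add (mono b) (mono (flp (s, j) b)))
  rw [← Finset.sum_add_distrib, ← key, Finset.mul_sum]
  refine Finset.sum_le_sum fun D hD => ?_
  have hD' : ∀ i, tch f ε (flp (s, j) b) (D i).1 (D i).2 = tch f ε b (D i).1 (D i).2 := by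
    intro i
    apply tch_flp
    intro β hβ
    have := Fintype.mem_piFinset.1 hD i
    rw [Finset.mem_compl] at this
    apply this
    rw [hT, Finset.mem_image]
    exact ⟨β, Finset.mem_univ _, hβ.symm⟩
  have hw : wt ρ (tch f ε (flp (s, j) b)) D = wt ρ (tch f ε b) D := by
    unfold wt
    simp only [hD']
  simp only [hD', hw]
  rw [← mul_add, mul_comm (2 * ε)]
  refine mul_le_mul_of_nonneg_left ?_ (wt_nonneg hρ (tch_dist f ε h0 h1 b) D)
  rw [← Finset.sum_add_distrib]
  have : ∀ β : Bool, ε ≤ G D (fun i => tch f ε b (D i).1 (D i).2) s (f (some (j, β)))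
        (tch f ε b s (f (some (j, β)))) + G D (fun i => tch f ε b (D i).1 (D i).2) s (f (some (j, β)))
        (tch f ε (flp (s, j) b) s (f (some (j, β)))) := by
    intro β
    refine le_trans ?_ (hG1 _ _ _ _ _ _)
    rw [tch_val, tch_val, flp_self]
    cases b (s, j) <;> cases β <;> simp [le_abs_self, abs_of_nonneg h0]
  rw [Fintype.sum_bool]
  linarith [this true, this false]

lemma avg_bound {S A : Type} [Fintype S] [Fintype A] {n m : ℕ}
    (f : Option (Fin m × Bool) ↪ A) (ε : ℝ)
    (h0 : 0 ≤ ε) (h1 : m * ε ≤ 1) (ρ : S → ℝ) (hρ : IsDist ρ)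
    (G : (Fin n → S × A) → (Fin n → ℝ) → S → A → ℝ → ℝ)
    (hG0 : ∀ D R s a p, 0 ≤ G D R s a p)
    (hG1 : ∀ D R s a p q, |p - q| ≤ G D R s a p + G D R s a q) :
    ∃ b : S × Fin m → Bool, ∑ s, ρ s * (1 / 2 * (m * (ε * (1 - ρ s * ε) ^ n))) ≤
      ∑ D, wt ρ (tch f ε b) D * ∑ s, ρ s * (1 / 2 * ∑ a,
        G D (fun i => tch f ε b (D i).1 (D i).2) s a (tch f ε b s a)) := by
  classical
  set F : S → Fin m → (S × Fin m → Bool) → ℝ := fun s j b =>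
    ∑ D, wt ρ (tch f ε b) D * ∑ β : Bool,
      G D (fun i => tch f ε b (D i).1 (D i).2) s (f (some (j, β)))
        (tch f ε b s (f (some (j, β)))) with hF
  have hT : ∀ s j, ∑ _b : S × Fin m → Bool, (ε * (1 - ρ s * ε) ^ n) ≤ ∑ b, F s j b := by
    intro s j
    have hflip : ∑ b, F s j (flp (s, j) b) = ∑ b, F s j b :=
      Equiv.sum_comp (⟨flp (s, j), flp (s, j), flp_flp _, flp_flp _⟩ :
        (S × Fin m → Bool) ≃ (S × Fin m → Bool)) (F s j)
    have := Finset.sum_le_sum (s := Finset.univ) fun b (_ : b ∈ Finset.univ) =>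
      pair_bound f ε h0 h1 ρ hρ G hG0 hG1 s j b (F s j) (fun b => rfl)
    rw [Finset.sum_add_distrib, hflip] at this
    have e : ∑ _b : S × Fin m → Bool, 2 * ε * (1 - ρ s * ε) ^ n =
        2 * ∑ _b : S × Fin m → Bool, (ε * (1 - ρ s * ε) ^ n) := by
      rw [Finset.mul_sum]
      simp only [mul_assoc]
    linarith
  have hlow : ∀ b, ∑ s, ρ s * (1 / 2 * ∑ j, F s j b) ≤
      ∑ D, wt ρ (tch f ε b) D * ∑ s, ρ s * (1 / 2 * ∑ a,
        G D (fun i => tch f ε b (D i).1 (D i).2) s a (tch f ε b s a)) := by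
    intro b
    have e : ∑ s, ρ s * (1 / 2 * ∑ j, F s j b) = ∑ D, wt ρ (tch f ε b) D * ∑ s, ρ s * (1 / 2 *
        ∑ j : Fin m, ∑ β : Bool, G D (fun i => tch f ε b (D i).1 (D i).2) s (f (some (j, β)))
        (tch f ε b s (f (some (j, β))))) := by
      simp only [hF, Finset.mul_sum]
      conv_rhs => rw [Finset.sum_comm]
      refine Finset.sum_congr rfl fun s _ => ?_
      rw [Finset.sum_comm]
      refine Finset.sum_congr rfl fun D _ => ?_
      refine Finset.sum_congr rfl fun j _ => ?_
      refine Finset.sum_congr rfl fun β _ => ?_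
      ring
    rw [e]
    refine Finset.sum_le_sum fun D _ => mul_le_mul_of_nonneg_left ?_
      (wt_nonneg hρ (tch_dist f ε h0 h1 b) D)
    refine Finset.sum_le_sum fun s _ => mul_le_mul_of_nonneg_left ?_ (hρ.1 s)
    refine mul_le_mul_of_nonneg_left ?_ (by norm_num)
    rw [← Fintype.sum_prod_type' (f := fun j β =>
      G D (fun i => tch f ε b (D i).1 (D i).2) s (f (some (j, β))) (tch f ε b s (f (some (j, β)))))]
    have hinj : Function.Injective (fun z : Fin m × Bool => f (some z)) :=
      f.injective.comp (Option.some_injective _)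
    have := Finset.sum_image (s := (Finset.univ : Finset (Fin m × Bool)))
      (f := fun a => G D (fun i => tch f ε b (D i).1 (D i).2) s a (tch f ε b s a))
      (g := fun z : Fin m × Bool => f (some z)) hinj.injOn
    rw [← this]
    exact Finset.sum_le_sum_of_subset_of_nonneg (Finset.subset_univ _) fun a _ _ => hG0 _ _ _ _ _
  obtain ⟨b, -, hb⟩ := Finset.exists_le_of_sum_le
    (s := (Finset.univ : Finset (S × Fin m → Bool)))
    (f := fun _ => ∑ s, ρ s * (1 / 2 * (m * (ε * (1 - ρ s * ε) ^ n))))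
    (g := fun b => ∑ s, ρ s * (1 / 2 * ∑ j, F s j b))
    Finset.univ_nonempty (by
      rw [Finset.sum_comm]
      conv_rhs => rw [Finset.sum_comm]
      refine Finset.sum_le_sum fun s _ => ?_
      simp only [← Finset.mul_sum]
      refine mul_le_mul_of_nonneg_left ?_ (hρ.1 s)
      refine mul_le_mul_of_nonneg_left ?_ (by norm_num)
      rw [Finset.sum_comm]
      have := Finset.sum_le_sum (s := Finset.univ) fun j (_ : j ∈ Finset.univ) => hT s j
      refine le_trans (le_of_eq ?_) this
      simp only [Finset.sum_const, Finset.card_univ, Fintype.card_fin, nsmul_eq_mul]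
      ring)
  exact ⟨b, hb.trans (hlow b)⟩

lemma pow_low (n : ℕ) (hn : 0 < n) : (1 / 3 : ℝ) ≤ (1 - 1 / ((n : ℝ) + 1)) ^ n := by
  have hn' : (0 : ℝ) < n := by exact_mod_cast hn
  have e : (1 - 1 / ((n : ℝ) + 1)) = (1 + 1 / (n : ℝ))⁻¹ := by field_simp; ring
  rw [e, inv_pow, one_div]
  apply inv_anti₀ (by positivity)
  calc (1 + 1 / (n : ℝ)) ^ n ≤ (Real.exp (1 / n)) ^ n := by
        gcongr
        linarith [Real.add_one_le_exp (1 / (n : ℝ))]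
    _ = Real.exp 1 := by
        rw [← Real.exp_nat_mul]; congr 1; field_simp
    _ ≤ 3 := by linarith [Real.exp_one_lt_d9]

end helpers

/-- minimax lower bound `c·|S||A|/n` for transfer via partial soft
labels: the learner additionally observes `π*(a_i|s_i)` for each sample. -/
theorem stmt_4 :
    ∃ c : ℝ, 0 < c ∧
      ∀ (S A : Type) [Fintype S] [Fintype A] [Nonempty S],
        3 ≤ Fintype.card A →
        ∀ n : ℕ, 0 < n →
          (Fintype.card S : ℝ) * ((Fintype.card A : ℝ) - 1) / 2 - 1 ≤ n →
          ∀ (Ω : Type) [MeasurableSpace Ω] (μ : Measure Ω) [IsProbabilityMeasure μ]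
            (est : (Fin n → S × A) → (Fin n → ℝ) → Ω → S → A → ℝ),
            (∀ D R, Measurable (est D R)) →
            (∀ D R ω, IsCondDist (est D R ω)) →
            ∃ ρ : S → ℝ, ∃ πs : S → A → ℝ,
              IsDist ρ ∧ IsCondDist πs ∧
              c * (Fintype.card S * Fintype.card A : ℝ) / n ≤
                ∑ D : Fin n → S × A, wt ρ πs D *
                  ∫ ω, condTV ρ (est D (fun i => πs (D i).1 (D i).2) ω) πs ∂μ := by
  refine ⟨1 / 72, by norm_num, ?_⟩
  intro S A _ _ _ hA n hn hnS Ω _ μ _ est hmeas hdist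
  set k := Fintype.card A with hk
  set N : ℝ := (Fintype.card S : ℝ) with hN
  have hNpos : 0 < N := by rw [hN]; exact_mod_cast Fintype.card_pos
  set m : ℕ := (k - 1) / 2 with hm
  have hcard : Fintype.card (Option (Fin m × Bool)) ≤ Fintype.card A := by
    simp only [Fintype.card_option, Fintype.card_prod, Fintype.card_fin, Fintype.card_bool]
    omega
  obtain ⟨f⟩ := Function.Embedding.nonempty_of_card_le hcard
  have hn' : (1 : ℝ) ≤ n := by exact_mod_cast hn
  have hm2 : (2 : ℝ) * m ≤ k - 1 := by
    have : 2 * m + 1 ≤ k := by omega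
    have : (2 : ℝ) * m + 1 ≤ k := by exact_mod_cast this
    linarith
  have hm6 : (k : ℝ) ≤ 6 * m := by
    have : k ≤ 6 * m := by omega
    exact_mod_cast this
  set ε : ℝ := N / (n + 1) with hε
  have h0 : 0 ≤ ε := by positivity
  have h1 : m * ε ≤ 1 := by
    rw [hε, mul_div_assoc', div_le_one (by positivity)]
    nlinarith
  set ρ : S → ℝ := fun _ => 1 / N with hρdef
  have hρ : IsDist ρ := by
    refine ⟨fun _ => by positivity, ?_⟩
    simp only [hρdef, Finset.sum_const, Finset.card_univ, nsmul_eq_mul, ← hN]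
    field_simp
  have hest : ∀ D R s a, Measurable fun ω => est D R ω s a := fun D R s a =>
    (measurable_pi_apply a).comp ((measurable_pi_apply s).comp (hmeas D R))
  have hle1 : ∀ D R ω s a, est D R ω s a ≤ 1 := by
    intro D R ω s a
    rw [← (hdist D R ω s).2]
    exact Finset.single_le_sum (fun a _ => (hdist D R ω s).1 a) (Finset.mem_univ a)
  have hint : ∀ D R s a p, Integrable (fun ω => |est D R ω s a - p|) μ := by
    intro D R s a p
    refine Integrable.abs (Integrable.sub ?_ (integrable_const _))
    refine Integrable.of_bound (hest D R s a).aestronglyMeasurable 1 (Filter.Eventually.of_forall fun ω => ?_)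
    rw [Real.norm_eq_abs, abs_of_nonneg ((hdist D R ω s).1 a)]
    exact hle1 D R ω s a
  obtain ⟨b, hb⟩ := avg_bound (n := n) f ε h0 h1 ρ hρ
    (fun D R s a p => ∫ ω, |est D R ω s a - p| ∂μ)
    (fun D R s a p => integral_nonneg fun ω => abs_nonneg _)
    (fun D R s a p q => by
      rw [← integral_add (hint D R s a p) (hint D R s a q)]
      have : |p - q| = ∫ _ω, |p - q| ∂μ := by simp
      rw [this]
      refine integral_mono (integrable_const _) ((hint D R s a p).add (hint D R s a q)) fun ω => ?_
      have := abs_sub_le p (est D R ω s a) q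
      rw [abs_sub_comm p (est D R ω s a)] at this
      exact this)
  refine ⟨ρ, tch f ε b, hρ, tch_dist f ε h0 h1 b, ?_⟩
  have hI : ∀ D R (π : S → A → ℝ), ∫ ω, condTV ρ (est D R ω) π ∂μ =
      ∑ s, ρ s * (1 / 2 * ∑ a, ∫ ω, |est D R ω s a - π s a| ∂μ) := by
    intro D R π
    unfold condTV
    rw [integral_finsetSum]
    · refine Finset.sum_congr rfl fun s _ => ?_
      rw [integral_const_mul, integral_const_mul, integral_finsetSum]
      exact fun a _ => hint D R s a _
    · intro s _
      exact ((integrable_finsetSum _ fun a _ => hint D R s a _).const_mul _).const_mul _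
  simp only [hI]
  refine le_trans ?_ hb
  have hρε : 1 / N * ε = 1 / ((n : ℝ) + 1) := by rw [hε]; field_simp
  simp only [hρdef, hρε, Finset.sum_const, Finset.card_univ, nsmul_eq_mul, ← hN]
  have hq := pow_low n hn
  have hstep : 1 / 72 * (N * k) / n ≤ 1 / 2 * (m * (ε * (1 / 3))) := by
    rw [hε, div_le_iff₀ (by positivity)]
    have e : 1 / 2 * ((m : ℝ) * (N / (n + 1) * (1 / 3))) * n = N * m / 6 * (n / (n + 1)) := by
      field_simp
      ring
    have h2 : (1 / 2 : ℝ) ≤ n / (n + 1) := by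
      rw [le_div_iff₀ (by positivity)]; linarith
    rw [e]
    have h3 : N * m / 6 * (1 / 2) ≤ N * m / 6 * (n / (n + 1)) :=
      mul_le_mul_of_nonneg_left h2 (by positivity)
    nlinarith
  refine hstep.trans ?_
  rw [← mul_assoc N, mul_one_div_cancel hNpos.ne', one_mul]
  gcongr
end

section
/- Let S and A be nonempty finite sets with |S| ≥ 2 and |A| ≥ 2, and let n be a positive integer with n > |S| − 1. For every (possibly randomized) learner π̂ that maps the pair (D, Q) — where D ∈ (S×A)^n and Q = { (s, π*(·|s)) : s appears among s_1,…,s_n } records the full teacher distribution at every sampled input — to a conditional distribution in Δ(A|S), there exist ρ ∈ Δ(S) and π* ∈ Δ(A|S) such that, when D consists of n i.i.d. samples from ρ×π*, the expected risk satisfies E[ TV(π̂(D,Q) ‖ π* | ρ) ] ≥ (|S| − 1) / (2e(n+1)). -/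
open Finset MeasureTheory

open scoped Classical

/-- The soft-label side information `Q`: the full teacher distribution `π*(·|s)`
at every input `s` visited by the dataset `D`, and nothing elsewhere. -/
noncomputable def softLabels {S A : Type} {n : ℕ} (πs : S → A → ℝ)
    (D : Fin n → S × A) : S → Option (A → ℝ) :=
  fun s => if ∃ i, (D i).1 = s then some (πs s) else none


/-- deterministic teacher indexed by a bit per input -/
noncomputable def teach {S A : Type} (a0 a1 : A) (θ : S → Bool) : S → A → ℝ :=
  fun s a => if a = (if θ s then a1 else a0) then 1 else 0

/-- flip the bit at `s` -/
noncomputable def flipAt {S : Type} (s : S) (θ : S → Bool) : S → Bool :=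
  fun t => if t = s then !(θ t) else θ t

theorem flipAt_invol {S : Type} (s : S) : Function.Involutive (flipAt s) := by
  intro θ
  funext t
  by_cases h : t = s <;> simp [flipAt, h]

theorem teach_dist {S A : Type} [Fintype A] (a0 a1 : A) (θ : S → Bool) :
    IsCondDist (teach a0 a1 θ) := by
  intro s
  refine ⟨fun a => ?_, ?_⟩
  · unfold teach; split_ifs <;> norm_num
  · simp [teach]

theorem teach_flip {S A : Type} (a0 a1 : A) (θ : S → Bool) (s t : S) (h : t ≠ s) :
    teach a0 a1 (flipAt s θ) t = teach a0 a1 θ t := by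
  funext a
  simp [teach, flipAt, h]

theorem pair_bound_s5 {S A : Type} [Fintype A] (a0 a1 : A) (hne : a0 ≠ a1) (θ : S → Bool) (s : S)
    (p : A → ℝ) :
    1 ≤ (1 / 2) * ∑ a, |p a - teach a0 a1 θ s a|
      + (1 / 2) * ∑ a, |p a - teach a0 a1 (flipAt s θ) s a| := by
  rw [← mul_add, ← Finset.sum_add_distrib]
  have h1 : ∑ a ∈ ({a0, a1} : Finset A), (1 : ℝ) ≤
      ∑ a, (|p a - teach a0 a1 θ s a| + |p a - teach a0 a1 (flipAt s θ) s a|) := by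
    refine (Finset.sum_le_sum ?_).trans
      (Finset.sum_le_sum_of_subset_of_nonneg (Finset.subset_univ _)
        (fun _ _ _ => by positivity))
    intro a ha
    have key : |p a - 1| + |p a| ≥ 1 := by
      have := abs_sub (p a - 1) (p a)
      rcases abs_cases (p a - 1) with h | h <;> rcases abs_cases (p a) with h' | h' <;> linarith
    simp only [Finset.mem_insert, Finset.mem_singleton] at ha
    rcases ha with rfl | rfl <;> cases hb : θ s <;>
      simp [teach, flipAt, hb, hne, hne.symm] <;> linarith
  rw [Finset.sum_const, Finset.card_pair hne] at h1
  norm_num at h1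
  linarith

theorem mass_avoid {S A : Type} [Fintype S] [Fintype A] (n : ℕ) (ρ : S → ℝ) (π : S → A → ℝ)
    (hρ : IsDist ρ) (hπ : IsCondDist π) (s : S) :
    ∑ D : Fin n → S × A, (if ∃ i, (D i).1 = s then 0 else wt ρ π D) = (1 - ρ s) ^ n := by
  have h1 : 1 - ρ s = ∑ x : S × A, (if x.1 = s then 0 else ρ x.1 * π x.1 x.2) := by
    rw [Fintype.sum_prod_type]
    have : ∀ t, ∑ a, (if t = s then 0 else ρ t * π t a) = ρ t - if t = s then ρ t else 0 := by
      intro t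
      by_cases h : t = s
      · simp [h]
      · simp [h, ← Finset.mul_sum, (hπ t).2]
    simp only [this, Finset.sum_sub_distrib, hρ.2]
    simp
  rw [h1, Fintype.sum_pow]
  refine Finset.sum_congr rfl fun D _ => ?_
  split_ifs with h
  · obtain ⟨i, hi⟩ := h
    exact (Finset.prod_eq_zero (Finset.mem_univ i) (by simp [hi])).symm
  · push Not at h
    unfold wt
    exact Finset.prod_congr rfl fun i _ => by simp [h i]

theorem exp_bound (n : ℕ) (hn : 0 < n) :
    (Real.exp 1)⁻¹ ≤ (1 - 1 / ((n : ℝ) + 1)) ^ n := by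
  have hn' : (0 : ℝ) < n := by exact_mod_cast hn
  have h1 : 1 - 1 / ((n : ℝ) + 1) = (1 + 1 / (n : ℝ))⁻¹ := by
    field_simp
    ring
  rw [h1, inv_pow]
  apply inv_anti₀ (by positivity)
  calc (1 + 1 / (n : ℝ)) ^ n ≤ (Real.exp (1 / n)) ^ n := by
        apply pow_le_pow_left₀ (by positivity)
        have := Real.add_one_le_exp (1 / (n : ℝ))
        linarith
    _ = Real.exp 1 := by
        rw [← Real.exp_nat_mul]
        congr 1
        field_simp

/-- minimax lower bound `(|S|−1)/(2e(n+1))` for transfer via full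
soft labels at every visited input. -/
theorem stmt_5 (S A : Type) [Fintype S] [Fintype A]
    (hS : 2 ≤ Fintype.card S) (hA : 2 ≤ Fintype.card A)
    (n : ℕ) (hn : (Fintype.card S : ℝ) - 1 < n)
    (Ω : Type) [MeasurableSpace Ω] (μ : Measure Ω) [IsProbabilityMeasure μ]
    (est : (Fin n → S × A) → (S → Option (A → ℝ)) → Ω → S → A → ℝ)
    (hmeas : ∀ D Q, Measurable (est D Q))
    (hdist : ∀ D Q ω, IsCondDist (est D Q ω)) :
    ∃ ρ : S → ℝ, ∃ πs : S → A → ℝ,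
      IsDist ρ ∧ IsCondDist πs ∧
      ((Fintype.card S : ℝ) - 1) / (2 * Real.exp 1 * (n + 1)) ≤
        ∑ D : Fin n → S × A, wt ρ πs D *
          ∫ ω, condTV ρ (est D (softLabels πs D) ω) πs ∂μ := by
  have hk : Fintype.card S ≤ n := by
    have : (Fintype.card S : ℝ) < n + 1 := by linarith
    have : Fintype.card S < n + 1 := by exact_mod_cast this
    omega
  obtain ⟨a0, a1, hne⟩ := Fintype.exists_pair_of_one_lt_card (α := A) (by omega)
  obtain ⟨s0⟩ : Nonempty S := Fintype.card_pos_iff.1 (by omega)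
  have hn1 : (0 : ℝ) < n + 1 := by positivity
  set k : ℝ := (Fintype.card S : ℝ) - 1 with hkdef
  have hk0 : 0 ≤ k := by
    have : (2 : ℝ) ≤ Fintype.card S := by exact_mod_cast hS
    rw [hkdef]; linarith
  have hcard : (((Finset.univ.erase s0).card : ℕ) : ℝ) = k := by
    rw [Finset.card_erase_of_mem (Finset.mem_univ _), Finset.card_univ, Nat.cast_sub (by omega)]
    simp [hkdef]
  set ρ : S → ℝ := fun s => if s = s0 then 1 - k / (n + 1) else 1 / (n + 1) with hρdef
  have hρ : IsDist ρ := by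
    constructor
    · intro s
      simp only [hρdef]
      split_ifs
      · have : k / (n + 1) ≤ 1 := by
          rw [div_le_one hn1]; linarith
        linarith
      · positivity
    · rw [← Finset.add_sum_erase _ _ (Finset.mem_univ s0)]
      have : ∑ x ∈ Finset.univ.erase s0, ρ x
          = ∑ x ∈ Finset.univ.erase s0, (1 / ((n : ℝ) + 1)) :=
        Finset.sum_congr rfl fun x hx => by simp [hρdef, Finset.ne_of_mem_erase hx]
      rw [this, Finset.sum_const, nsmul_eq_mul, hcard]
      simp only [hρdef, if_true]
      ring
  have hw : ∀ θ (D : Fin n → S × A), 0 ≤ wt ρ (teach a0 a1 θ) D := fun θ D =>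
    Finset.prod_nonneg fun i _ => mul_nonneg (hρ.1 _) ((teach_dist a0 a1 θ _).1 _)
  -- integrability
  have hIntg : ∀ D Q (π : S → A → ℝ) s,
      Integrable (fun ω => (1 / 2) * ∑ a, |est D Q ω s a - π s a|) μ := by
    intro D Q π s
    refine Integrable.const_mul (integrable_finsetSum _ fun a _ => ?_) _
    refine Integrable.abs (Integrable.sub ?_ (integrable_const _))
    refine Integrable.of_bound (C := 1) ?_ ?_
    · exact ((measurable_pi_apply a).comp
        ((measurable_pi_apply s).comp (hmeas D Q))).aestronglyMeasurable
    · refine Filter.Eventually.of_forall fun ω => ?_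
      have h := hdist D Q ω s
      rw [Real.norm_eq_abs, abs_of_nonneg (h.1 a), ← h.2]
      exact Finset.single_le_sum (fun b _ => h.1 b) (Finset.mem_univ a)
  set T : (S → Bool) → (Fin n → S × A) → S → ℝ := fun θ D s =>
    ∫ ω, (1 / 2) * ∑ a, |est D (softLabels (teach a0 a1 θ) D) ω s a - teach a0 a1 θ s a| ∂μ
    with hT
  have hT0 : ∀ θ D s, 0 ≤ T θ D s := fun θ D s =>
    integral_nonneg fun ω => by positivity
  set r : (S → Bool) → S → ℝ := fun θ s =>
    ∑ D : Fin n → S × A, (if ∃ i, (D i).1 = s then 0 else wt ρ (teach a0 a1 θ) D) * T θ D s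
    with hr
  have hpair : ∀ θ s, (1 - ρ s) ^ n ≤ r θ s + r (flipAt s θ) s := by
    intro θ s
    rw [← mass_avoid n ρ (teach a0 a1 θ) hρ (teach_dist a0 a1 θ) s, hr]
    simp only
    rw [← Finset.sum_add_distrib]
    refine Finset.sum_le_sum fun D _ => ?_
    by_cases h : ∃ i, (D i).1 = s
    · simp [h]
    · simp only [h, if_false]
      have h' : ∀ i, (D i).1 ≠ s := by simpa using h
      have e1 : wt ρ (teach a0 a1 (flipAt s θ)) D = wt ρ (teach a0 a1 θ) D := by
        unfold wt
        exact Finset.prod_congr rfl fun i _ => by rw [teach_flip _ _ _ _ _ (h' i)]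
      have e2 : softLabels (teach a0 a1 (flipAt s θ)) D = softLabels (teach a0 a1 θ) D := by
        funext t
        unfold softLabels
        by_cases ht : t = s
        · subst ht; simp [h']
        · rw [teach_flip _ _ _ _ _ ht]
      rw [e1, ← mul_add]
      refine le_mul_of_one_le_right (hw θ D) ?_
      simp only [hT, e2]
      rw [← integral_add (hIntg _ _ _ _) (hIntg _ _ _ _)]
      calc (1 : ℝ) = ∫ _ω, (1 : ℝ) ∂μ := by simp
        _ ≤ _ := integral_mono (integrable_const _) ((hIntg _ _ _ _).add (hIntg _ _ _ _))
              fun ω => pair_bound_s5 a0 a1 hne θ s _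
  have hsum : ∀ s, (Fintype.card (S → Bool) : ℝ) * (1 - ρ s) ^ n ≤ 2 * ∑ θ, r θ s := by
    intro s
    have h1 : ∑ θ, r (flipAt s θ) s = ∑ θ, r θ s :=
      Equiv.sum_comp (flipAt_invol s).toPerm (fun θ => r θ s)
    calc (Fintype.card (S → Bool) : ℝ) * (1 - ρ s) ^ n
        = ∑ _θ : S → Bool, (1 - ρ s) ^ n := by
          rw [Finset.sum_const, nsmul_eq_mul, Finset.card_univ]
      _ ≤ ∑ θ, (r θ s + r (flipAt s θ) s) := Finset.sum_le_sum fun θ _ => hpair θ s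
      _ = 2 * ∑ θ, r θ s := by rw [Finset.sum_add_distrib, h1]; ring
  set R : (S → Bool) → ℝ := fun θ => ∑ D : Fin n → S × A, wt ρ (teach a0 a1 θ) D *
      ∫ ω, condTV ρ (est D (softLabels (teach a0 a1 θ) D) ω) (teach a0 a1 θ) ∂μ with hR
  have hRr : ∀ θ, ∑ s ∈ Finset.univ.erase s0, (1 / ((n : ℝ) + 1)) * r θ s ≤ R θ := by
    intro θ
    have e : R θ = ∑ s, ρ s * ∑ D : Fin n → S × A, wt ρ (teach a0 a1 θ) D * T θ D s := by
      simp only [hR, condTV, Finset.mul_sum (s := (Finset.univ : Finset (Fin n → S × A)))]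
      rw [Finset.sum_comm]
      refine Finset.sum_congr rfl fun D _ => ?_
      rw [integral_finsetSum _ fun s _ => (hIntg _ _ _ _).const_mul _, Finset.mul_sum]
      refine Finset.sum_congr rfl fun s _ => ?_
      rw [integral_const_mul]
      simp only [hT]
      ring
    rw [e]
    refine (Finset.sum_le_sum fun s hs => ?_).trans
      (Finset.sum_le_sum_of_subset_of_nonneg (Finset.subset_univ (Finset.univ.erase s0)) fun s _ _ =>
        mul_nonneg (hρ.1 s) (Finset.sum_nonneg fun D _ => mul_nonneg (hw θ D) (hT0 θ D s)))
    have hs' : ρ s = 1 / ((n : ℝ) + 1) := by simp [hρdef, Finset.ne_of_mem_erase hs]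
    rw [hs']
    refine mul_le_mul_of_nonneg_left (Finset.sum_le_sum fun D _ => ?_) (by positivity)
    refine mul_le_mul_of_nonneg_right ?_ (hT0 θ D s)
    split_ifs
    · exact hw θ D
    · exact le_rfl
  have hfinal : ∑ _θ : S → Bool, k / (2 * Real.exp 1 * (n + 1)) ≤ ∑ θ, R θ := by
    refine le_trans ?_ (Finset.sum_le_sum fun θ _ => hRr θ)
    rw [Finset.sum_comm, Finset.sum_const, nsmul_eq_mul, Finset.card_univ]
    set N : ℝ := (Fintype.card (S → Bool) : ℝ) with hN
    have hN0 : 0 ≤ N := Nat.cast_nonneg _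
    have hb := exp_bound n (by omega)
    have : ∀ s ∈ Finset.univ.erase s0,
        (1 / ((n : ℝ) + 1)) * (N * (Real.exp 1)⁻¹ / 2) ≤ ∑ θ, (1 / ((n : ℝ) + 1)) * r θ s := by
      intro s hs
      rw [← Finset.mul_sum]
      refine mul_le_mul_of_nonneg_left ?_ (by positivity)
      have hs' : ρ s = 1 / ((n : ℝ) + 1) := by simp [hρdef, Finset.ne_of_mem_erase hs]
      have h2 := hsum s
      rw [hs'] at h2
      have h3 := mul_le_mul_of_nonneg_left hb hN0
      linarith
    refine le_trans (le_of_eq ?_) (Finset.sum_le_sum this)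
    rw [Finset.sum_const, nsmul_eq_mul, hcard]
    field_simp
  obtain ⟨θ, -, hθ⟩ := Finset.exists_le_of_sum_le (Finset.univ_nonempty) hfinal
  exact ⟨ρ, teach a0 a1 θ, hρ, teach_dist a0 a1 θ, hθ⟩
end
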